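/- arXiv:1012.4257 — 3 statements merged into one kernel-verified Lean document; each statement's English description precedes it below -/
import Mathlib

section
/- For every integer n ≥ 1, the quotient ℂ-algebra ℂ[x₁,x₂]/(h_{2n}(x₁,x₂), h_n(x₁²,x₂²) − 1) is a finite-dimensional ℂ-vector space of dimension 4n². -/
/-- The complete homogeneous symmetric function `h_r(y₁,y₂) = ∑_{i=0}^r y₁^i y₂^{r−i}`. -/
def hc {R : Type*} [CommRing R] (r : ℕ) (y₁ y₂ : R) : R :=
  ∑ i ∈ Finset.range (r + 1), y₁ ^ i * y₂ ^ (r - i)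

/-!
Since `(a + b) h_n(a², b²) = h_{2n+1}(a, b) = a h_{2n}(a, b) + b^{2n+1}`, the two relations force
`a = b c` with `c = b^{2n} - 1`. By homogeneity `h_{2n}(b c, b) = b^{2n} h_{2n}(c, 1)`, and
`b^{2n}` is a unit because it divides `h_n(a², b²) = 1`, so `h_{2n}(c, 1) = 0`. Conversely, if
`a = b c` and `h_{2n}(c, 1) = 0`, then `h_{2n}(a, b) = 0` and
`h_n(a², b²) = (c + 1) h_n(c², 1) = h_{2n+1}(c, 1) = 1`. Hence the quotient is generated by the
class of `x₂` with the single defining equation `h_{2n}(x₂^{2n} - 1, 1) = 0`, which is monic of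
degree `2n · 2n`.
-/

open Polynomial

section Identities

variable {A B : Type*} [CommRing A] [CommRing B]

lemma hc_zero (a b : A) : hc 0 a b = 1 := by simp [hc]

lemma hc_comm (r : ℕ) (a b : A) : hc r a b = hc r b a :=
  (Commute.all a b).geom_sum₂_comm (r + 1)

lemma hc_succ (r : ℕ) (a b : A) : hc (r + 1) a b = a * hc r a b + b ^ (r + 1) := by
  rw [hc_comm, hc_comm r a, add_comm (a * _)]
  exact geom_sum₂_succ_eq b a

lemma hc_mul_mul (r : ℕ) (c a b : A) : hc r (c * a) (c * b) = c ^ r * hc r a b := by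
  induction r with
  | zero => simp only [hc_zero, pow_zero, one_mul]
  | succ r ih =>
    rw [hc_succ, hc_succ, ih]
    ring

lemma map_hc {F : Type*} [FunLike F A B] [RingHomClass F A B] (f : F) (r : ℕ) (a b : A) :
    f (hc r a b) = hc r (f a) (f b) := by
  simp only [hc, map_sum, map_mul, map_pow]

lemma hc_sq_mul_add (n : ℕ) (a b : A) :
    hc n (a ^ 2) (b ^ 2) * (a + b) = hc (2 * n + 1) a b := by
  induction n with
  | zero => rw [hc_succ, mul_zero, hc_zero, hc_zero]; ring
  | succ n ih =>
    rw [hc_succ, show 2 * (n + 1) + 1 = 2 * n + 1 + 1 + 1 by ring, hc_succ, hc_succ, ← ih]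
    ring

theorem hc_eq_zero_and_hc_sq_eq_one_iff (n : ℕ) (a b : A) :
    hc (2 * n) a b = 0 ∧ hc n (a ^ 2) (b ^ 2) = 1 ↔
      a = b * (b ^ (2 * n) - 1) ∧ hc (2 * n) (b ^ (2 * n) - 1) 1 = 0 := by
  have hom (r : ℕ) (c : A) : hc r (b * c) b = b ^ r * hc r c 1 := by
    simpa only [mul_one] using hc_mul_mul r b c 1
  have hom_sq (c : A) : hc n ((b * c) ^ 2) (b ^ 2) = b ^ (2 * n) * hc n (c ^ 2) 1 := by
    rw [mul_pow, pow_mul, ← hc_mul_mul, mul_one]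
  constructor
  · rintro ⟨h, h_sq⟩
    have ha : a = b * (b ^ (2 * n) - 1) := by
      have key := hc_sq_mul_add n a b
      rw [hc_succ, h, h_sq] at key
      linear_combination key
    rw [ha, hom_sq] at h_sq
    rw [ha, hom] at h
    have hb : IsUnit (b ^ (2 * n)) := .of_mul_eq_one _ h_sq
    exact ⟨ha, hb.mul_right_eq_zero.mp h⟩
  · rintro ⟨rfl, h⟩
    refine ⟨by rw [hom, h, mul_zero], ?_⟩
    set c := b ^ (2 * n) - 1 with hc_def
    calc hc n ((b * c) ^ 2) (b ^ 2) = hc n (c ^ 2) (1 ^ 2) * (c + 1) := by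
          rw [hom_sq, one_pow, hc_def, sub_add_cancel, mul_comm]
      _ = hc (2 * n + 1) c 1 := hc_sq_mul_add n c 1
      _ = 1 := by rw [hc_succ, h, mul_zero, one_pow, zero_add]

end Identities

section Eliminant

variable {R : Type*} [CommRing R]

lemma monic_hc_one {q : R[X]} (hq : q.Monic) (hdeg : 0 < q.natDegree) (r : ℕ) :
    (hc r q 1).Monic := by
  simpa only [hc, one_pow, mul_one] using hq.geom_sum hdeg r.succ_ne_zero

lemma natDegree_hc_one {q : R[X]} (hq : q.Monic) (hdeg : 0 < q.natDegree) (r : ℕ) :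
    (hc r q 1).natDegree = r * q.natDegree := by
  induction r with
  | zero => rw [hc_zero, natDegree_one, zero_mul]
  | succ r ih =>
    rw [hc_succ, one_pow, ← C_1, natDegree_add_C, C_1, hq.natDegree_mul (monic_hc_one hq hdeg r),
      ih]
    ring

variable (R) in
/-- The polynomial `h_{2n}(X^{2n} - 1, 1)` obtained by eliminating `x₁` from the relations
`h_{2n}(x₁, x₂) = 0` and `h_n(x₁², x₂²) = 1`; the variable `X` stands for `x₂`. -/
noncomputable def hcEliminant (n : ℕ) : R[X] :=
  hc (2 * n) (X ^ (2 * n) - 1) 1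

lemma hcEliminant_monic (n : ℕ) : (hcEliminant R n).Monic := by
  nontriviality R
  rcases eq_or_ne n 0 with rfl | hn
  · rw [hcEliminant, mul_zero, hc_zero]
    exact monic_one
  · have hdeg : (X ^ (2 * n) - 1 : R[X]).natDegree = 2 * n := natDegree_X_pow_sub_C (r := 1)
    have hmonic : (X ^ (2 * n) - 1 : R[X]).Monic := monic_X_pow_sub_C 1 (by lia)
    exact monic_hc_one hmonic (by lia) _

lemma natDegree_hcEliminant [Nontrivial R] (n : ℕ) : (hcEliminant R n).natDegree = 4 * n ^ 2 := by
  rcases eq_or_ne n 0 with rfl | hn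
  · rw [hcEliminant, mul_zero, hc_zero, natDegree_one, zero_pow two_ne_zero, mul_zero]
  · have hdeg : (X ^ (2 * n) - 1 : R[X]).natDegree = 2 * n := natDegree_X_pow_sub_C (r := 1)
    have hmonic : (X ^ (2 * n) - 1 : R[X]).Monic := monic_X_pow_sub_C 1 (by lia)
    rw [hcEliminant, natDegree_hc_one hmonic (by lia), hdeg]
    ring

lemma aeval_hcEliminant {A : Type*} [CommRing A] [Algebra R A] (n : ℕ) (b : A) :
    aeval b (hcEliminant R n) = hc (2 * n) (b ^ (2 * n) - 1) 1 := by
  simp only [hcEliminant, map_hc, map_sub, map_pow, aeval_X, map_one]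

end Eliminant

section Quotient

variable (R : Type*) [CommRing R] (n : ℕ)

/-- The ideal generated by the relations `h_{2n}(x₁, x₂) = 0` and `h_n(x₁², x₂²) = 1`, over an
arbitrary coefficient ring; `X 0` and `X 1` stand for `x₁` and `x₂`. -/
noncomputable def hcIdeal : Ideal (MvPolynomial (Fin 2) R) :=
  Ideal.span {hc (2 * n) (MvPolynomial.X 0 : MvPolynomial (Fin 2) R) (MvPolynomial.X 1),
    hc n ((MvPolynomial.X 0 : MvPolynomial (Fin 2) R) ^ 2) (MvPolynomial.X 1 ^ 2) - 1}

variable {R n}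

theorem hcIdeal_le_ker_iff {A : Type*} [CommRing A] [Algebra R A]
    (f : MvPolynomial (Fin 2) R →ₐ[R] A) :
    hcIdeal R n ≤ RingHom.ker f ↔
      f (.X 0) = f (.X 1) * (f (.X 1) ^ (2 * n) - 1) ∧
        aeval (f (.X 1)) (hcEliminant R n) = 0 := by
  rw [aeval_hcEliminant, ← hc_eq_zero_and_hc_sq_eq_one_iff, hcIdeal, Ideal.span_le,
    Set.pair_subset_iff]
  simp only [SetLike.mem_coe, RingHom.mem_ker, map_sub, map_one, map_hc, map_pow, sub_eq_zero]

variable (R n)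

/-- The quotient by the two relations is generated by the class of `x₂`, subject only to the
eliminant; this class corresponds to the adjoined root. -/
noncomputable def hcQuotientEquiv :
    (MvPolynomial (Fin 2) R ⧸ hcIdeal R n) ≃ₐ[R] AdjoinRoot (hcEliminant R n) :=
  let x := Ideal.Quotient.mkₐ R (hcIdeal R n)
  let t := AdjoinRoot.root (hcEliminant R n)
  let φ : MvPolynomial (Fin 2) R →ₐ[R] AdjoinRoot (hcEliminant R n) :=
    MvPolynomial.aeval ![t * (t ^ (2 * n) - 1), t]
  have hx := hcIdeal_le_ker_iff x |>.mp (Ideal.Quotient.mkₐ_ker R _).ge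
  have hφ : hcIdeal R n ≤ RingHom.ker φ := by
    simp [hcIdeal_le_ker_iff, φ, t, AdjoinRoot.aeval_eq]
  let F : (MvPolynomial (Fin 2) R ⧸ hcIdeal R n) →ₐ[R] AdjoinRoot (hcEliminant R n) :=
    Ideal.Quotient.liftₐ _ φ hφ
  let G : AdjoinRoot (hcEliminant R n) →ₐ[R] MvPolynomial (Fin 2) R ⧸ hcIdeal R n :=
    AdjoinRoot.liftAlgHom _ (Algebra.ofId R _) (x (.X 1)) hx.2
  have hF₀ : F (x (.X 0)) = t * (t ^ (2 * n) - 1) := MvPolynomial.aeval_X _ 0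
  have hF₁ : F (x (.X 1)) = t := MvPolynomial.aeval_X _ 1
  have hG : G t = x (.X 1) := AdjoinRoot.liftAlgHom_root ..
  have hFG : F.comp G = AlgHom.id R _ :=
    AdjoinRoot.algHom_ext ((congrArg F hG).trans hF₁)
  have hGF : G.comp F = AlgHom.id R _ := by
    have hx₀ : G (F (x (.X 0))) = x (.X 0) := by
      rw [hF₀, hx.1, map_mul, map_sub, map_pow, map_one, hG]
    have hx₁ : G (F (x (.X 1))) = x (.X 1) := by rw [hF₁, hG]
    exact Ideal.Quotient.algHom_ext R
      (MvPolynomial.algHom_ext (Fin.forall_fin_two.mpr ⟨hx₀, hx₁⟩))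
  AlgEquiv.ofAlgHom F G hFG hGF

end Quotient

theorem stmt_8_general (R : Type*) [CommRing R] [Nontrivial R] (n : ℕ) :
    Module.Free R (MvPolynomial (Fin 2) R ⧸ hcIdeal R n) ∧
    Module.Finite R (MvPolynomial (Fin 2) R ⧸ hcIdeal R n) ∧
    Module.finrank R (MvPolynomial (Fin 2) R ⧸ hcIdeal R n) = 4 * n ^ 2 := by
  have hmonic := hcEliminant_monic (R := R) n
  have := hmonic.free_adjoinRoot
  have := hmonic.finite_adjoinRoot
  let e := (hcQuotientEquiv R n).toLinearEquiv
  refine ⟨.of_equiv e.symm, .equiv e.symm, e.finrank_eq.trans ?_⟩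
  rw [(AdjoinRoot.powerBasis' hmonic).finrank, AdjoinRoot.powerBasis'_dim, natDegree_hcEliminant]

/-- For `n ≥ 1`, the quotient `ℂ[x₁,x₂]/(h_{2n}(x₁,x₂), h_n(x₁²,x₂²) − 1)` is a
finite-dimensional `ℂ`-vector space of dimension `4n²`. -/
theorem stmt_8 (n : ℕ) (hn : 1 ≤ n) :
    FiniteDimensional ℂ
      (MvPolynomial (Fin 2) ℂ ⧸
        Ideal.span {hc (2 * n) (MvPolynomial.X 0 : MvPolynomial (Fin 2) ℂ) (MvPolynomial.X 1),
          hc n ((MvPolynomial.X 0 : MvPolynomial (Fin 2) ℂ) ^ 2) (MvPolynomial.X 1 ^ 2) - 1}) ∧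
    Module.finrank ℂ
      (MvPolynomial (Fin 2) ℂ ⧸
        Ideal.span {hc (2 * n) (MvPolynomial.X 0 : MvPolynomial (Fin 2) ℂ) (MvPolynomial.X 1),
          hc n ((MvPolynomial.X 0 : MvPolynomial (Fin 2) ℂ) ^ 2) (MvPolynomial.X 1 ^ 2) - 1})
      = 4 * n ^ 2 :=
  (stmt_8_general ℂ n).2
end

section
/- For every integer n ≥ 1, the quotient ring ℂ[x₁,x₂]/(h_{2n}(x₁,x₂), h_n(x₁²,x₂²) − 1) is a semisimple ring. -/
/-!
Multiplying the relations by `x₁ - x₂` and `x₁² - x₂²` turns them into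
`x₁ ^ (2n+1) = x₂ ^ (2n+1)` and `x₁ ^ (2n+2) - x₂ ^ (2n+2) = x₁² - x₂²`. The difference `x₁ - x₂`
is a unit of the quotient: on the diagonal the first relation reads `(2n+1) x₂ ^ (2n) = 0`, which
contradicts the second, `(n+1) x₂ ^ (2n) = 1`. Cancelling it gives `x₁ = x₂ ^ (2n+1) - x₂`, so `x₂`
generates the quotient; moreover `x₂` is a unit, and `x₁ ^ (2n+1) = x₂ ^ (2n+1)` becomes
`(x₂ ^ (2n) - 1) ^ (2n+1) = 1`. This equation for `x₂` is separable, since its derivative vanishes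
only where `x₂ = 0` or `x₂ ^ (2n) = 1`, and neither is a solution. An algebra generated by a root of
a separable polynomial is semisimple.
-/

section CompleteHomogeneous

variable {R S : Type*} [CommRing R] [CommRing S]

theorem map_hc_s9 (f : R →+* S) (r : ℕ) (x y : R) : f (hc r x y) = hc r (f x) (f y) := by
  simp only [hc, map_sum, map_mul, map_pow]

theorem hc_mul_sub (r : ℕ) (x y : R) : hc r x y * (x - y) = x ^ (r + 1) - y ^ (r + 1) :=
  (Commute.all x y).geom_sum₂_mul (r + 1)

theorem hc_self (r : ℕ) (x : R) : hc r x x = (r + 1 : ℕ) * x ^ r :=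
  geom_sum₂_self x (r + 1)

theorem sub_dvd_hc_sub_hc_self (r : ℕ) (x y : R) : x - y ∣ hc r x y - hc r y y := by
  rw [hc, hc, ← Finset.sum_sub_distrib]
  refine Finset.dvd_sum fun i _ ↦ ?_
  rw [← sub_mul]
  exact (sub_dvd_pow_sub_pow x y i).mul_right _

end CompleteHomogeneous

section Relations

variable {A : Type*} [CommRing A] {n : ℕ} {x y : A}

theorem isUnit_sub_of_hc_eq_zero_of_hc_sq_eq_one (hn : IsUnit ((2 * n + 1 : ℕ) : A))
    (h₀ : hc (2 * n) x y = 0) (h₁ : hc n (x ^ 2) (y ^ 2) = 1) : IsUnit (x - y) := by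
  have dvd_pow : x - y ∣ y ^ (2 * n) := by
    have h := sub_dvd_hc_sub_hc_self (2 * n) x y
    rwa [h₀, zero_sub, dvd_neg, hc_self, hn.dvd_mul_left] at h
  have dvd_one_sub : x - y ∣ 1 - (n + 1 : ℕ) * y ^ (2 * n) := by
    have h := (sub_dvd_pow_sub_pow x y 2).trans (sub_dvd_hc_sub_hc_self n (x ^ 2) (y ^ 2))
    rwa [h₁, hc_self, ← pow_mul] at h
  exact isUnit_of_dvd_one ((dvd_sub_left (dvd_pow.mul_left _)).mp dvd_one_sub)

theorem eq_pow_sub_of_hc_eq_zero_of_hc_sq_eq_one (hn : IsUnit ((2 * n + 1 : ℕ) : A))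
    (h₀ : hc (2 * n) x y = 0) (h₁ : hc n (x ^ 2) (y ^ 2) = 1) : x = y ^ (2 * n + 1) - y := by
  have eq₀ := hc_mul_sub (2 * n) x y
  have eq₁ := hc_mul_sub n (x ^ 2) (y ^ 2)
  rw [h₀] at eq₀
  rw [h₁] at eq₁
  refine (isUnit_sub_of_hc_eq_zero_of_hc_sq_eq_one hn h₀ h₁).mul_left_cancel ?_
  linear_combination eq₁ - x * eq₀

theorem pow_sub_one_pow_eq_one_of_hc_eq_zero_of_hc_sq_eq_one (hn : IsUnit ((2 * n + 1 : ℕ) : A))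
    (h₀ : hc (2 * n) x y = 0) (h₁ : hc n (x ^ 2) (y ^ 2) = 1) :
    (y ^ (2 * n) - 1) ^ (2 * n + 1) = 1 := by
  have hx : x = y * (y ^ (2 * n) - 1) := by
    rw [eq_pow_sub_of_hc_eq_zero_of_hc_sq_eq_one hn h₀ h₁]
    ring
  have isUnit_y : IsUnit y := by
    have factorization : x - y = y * (y ^ (2 * n) - 2) := by
      rw [hx]
      ring
    exact isUnit_of_mul_isUnit_left
      (factorization ▸ isUnit_sub_of_hc_eq_zero_of_hc_sq_eq_one hn h₀ h₁)
  have pow_eq : x ^ (2 * n + 1) = y ^ (2 * n + 1) := by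
    rw [← sub_eq_zero, ← hc_mul_sub, h₀, zero_mul]
  refine (isUnit_y.pow (2 * n + 1)).mul_left_cancel ?_
  rw [← mul_pow, ← hx, pow_eq, mul_one]

end Relations

section Separable

open Polynomial

variable {R : Type*}

theorem separable_comp_of_isCoprime_derivative [CommSemiring R] {p q : R[X]} (hp : p.Separable)
    (h : IsCoprime (p.comp q) (derivative q)) : (p.comp q).Separable := by
  rw [separable_def, derivative_comp]
  exact h.mul_right (IsCoprime.map hp (compRingHom q))

theorem isCoprime_X_of_isUnit_coeff_zero [CommRing R] {p : R[X]} (h : IsUnit (p.coeff 0)) :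
    IsCoprime p X := by
  have coprime_const : IsCoprime (C (p.coeff 0)) X :=
    isCoprime_one_left.of_isCoprime_of_dvd_left (isUnit_C.mpr h).dvd
  rw [← X_mul_divX_add p]
  exact coprime_const.mul_add_left_left _

theorem separable_X_pow_sub_one_pow_sub_one [CommRing R] {m k : ℕ} (hk : Odd k)
    (h2 : IsUnit (2 : R)) (hm : IsUnit (m : R)) (hkR : IsUnit (k : R)) :
    ((X ^ m - 1) ^ k - 1 : R[X]).Separable := by
  nontriviality R
  have m_ne_zero : m ≠ 0 := by
    rintro rfl
    simp at hm
  have comp_eq : (X ^ k - 1 : R[X]).comp (X ^ m - 1) = (X ^ m - 1) ^ k - 1 := by simp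
  have coeff_zero : ((X ^ m - 1) ^ k - 1 : R[X]).coeff 0 = -2 := by
    simp only [coeff_zero_eq_eval_zero, eval_sub, eval_pow, eval_X, eval_one, zero_pow m_ne_zero,
      zero_sub, hk.neg_one_pow]
    norm_num
  have coprime_X : IsCoprime ((X ^ m - 1) ^ k - 1 : R[X]) X :=
    isCoprime_X_of_isUnit_coeff_zero (coeff_zero ▸ h2.neg)
  rw [← comp_eq]
  refine separable_comp_of_isCoprime_derivative (by simpa using separable_X_pow_sub_C_unit 1 hkR) ?_
  rw [comp_eq, derivative_sub, derivative_one, sub_zero, derivative_X_pow,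
    isCoprime_mul_unit_left_right (isUnit_C.mpr hm)]
  exact coprime_X.pow_right

end Separable

section Semisimple

open Polynomial

variable {K A : Type*} [Field K] [CommRing A] [Algebra K A]

theorem isSemisimpleRing_quotient_span_singleton {p : K[X]} (hp : Squarefree p) :
    IsSemisimpleRing (K[X] ⧸ Ideal.span {p}) := by
  have : Module.Finite K (K[X] ⧸ Ideal.span {p}) := (AdjoinRoot.powerBasis hp.ne_zero).finite
  have : IsArtinianRing (K[X] ⧸ Ideal.span {p}) := .of_finite K _
  have : IsReduced (K[X] ⧸ Ideal.span {p}) :=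
    (Ideal.isRadical_iff_quotient_reduced _).mp (isRadical_iff_span_singleton.mp hp.isRadical)
  exact IsArtinianRing.isSemisimpleRing_of_isReduced _

theorem isSemisimpleRing_of_adjoin_singleton_eq_top {a : A} (ha : Algebra.adjoin K {a} = ⊤)
    {p : K[X]} (hp : Squarefree p) (hpa : aeval a p = 0) : IsSemisimpleRing A := by
  have := isSemisimpleRing_quotient_span_singleton hp
  have aeval_surjective : Function.Surjective (aeval (R := K) a) := by
    rwa [← AlgHom.range_eq_top, ← Algebra.adjoin_singleton_eq_range_aeval]
  have span_le_ker : Ideal.span {p} ≤ RingHom.ker (aeval (R := K) a) :=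
    (Ideal.span_singleton_le_iff_mem _).mpr hpa
  exact RingHom.isSemisimpleRing_of_surjective
    (Ideal.Quotient.lift _ (aeval (R := K) a : K[X] →+* A) span_le_ker)
    (Ideal.Quotient.lift_surjective_of_surjective _ _ aeval_surjective)

theorem isSemisimpleRing_of_hc_eq_zero_of_hc_sq_eq_one {n : ℕ} {x y : A}
    (h2n : ((2 * n : ℕ) : K) ≠ 0) (hn : ((2 * n + 1 : ℕ) : K) ≠ 0)
    (hxy : Algebra.adjoin K {x, y} = ⊤)
    (h₀ : hc (2 * n) x y = 0) (h₁ : hc n (x ^ 2) (y ^ 2) = 1) : IsSemisimpleRing A := by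
  have hnA : IsUnit ((2 * n + 1 : ℕ) : A) := by
    simpa only [map_natCast] using hn.isUnit.map (algebraMap K A)
  have y_mem : y ∈ Algebra.adjoin K {y} := Algebra.self_mem_adjoin_singleton K y
  have x_mem : x ∈ Algebra.adjoin K {y} := by
    rw [eq_pow_sub_of_hc_eq_zero_of_hc_sq_eq_one hnA h₀ h₁]
    exact sub_mem (pow_mem y_mem _) y_mem
  have adjoin_y : Algebra.adjoin K {y} = ⊤ :=
    top_le_iff.mp (hxy ▸ Algebra.adjoin_le (Set.pair_subset x_mem y_mem))
  have two_ne_zero : (2 : K) ≠ 0 := by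
    rw [Nat.cast_mul] at h2n
    exact left_ne_zero_of_mul h2n
  have separable : ((X ^ (2 * n) - 1) ^ (2 * n + 1) - 1 : K[X]).Separable :=
    separable_X_pow_sub_one_pow_sub_one ⟨n, rfl⟩ two_ne_zero.isUnit h2n.isUnit hn.isUnit
  refine isSemisimpleRing_of_adjoin_singleton_eq_top adjoin_y separable.squarefree ?_
  simp [pow_sub_one_pow_eq_one_of_hc_eq_zero_of_hc_sq_eq_one hnA h₀ h₁]

end Semisimple

theorem adjoin_range_mk_X_eq_top {σ R : Type*} [CommRing R] (I : Ideal (MvPolynomial σ R)) :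
    Algebra.adjoin R (Set.range fun i ↦ Ideal.Quotient.mk I (MvPolynomial.X i)) = ⊤ := by
  have h := AlgHom.map_adjoin (Ideal.Quotient.mkₐ R I) (Set.range MvPolynomial.X)
  rw [MvPolynomial.adjoin_range_X, Algebra.map_top, ← Set.range_comp,
    (AlgHom.range_eq_top _).mpr (Ideal.Quotient.mkₐ_surjective R I)] at h
  exact h.symm

theorem stmt_9_general {K : Type*} [Field K] (n : ℕ)
    (h2n : ((2 * n : ℕ) : K) ≠ 0) (hn : ((2 * n + 1 : ℕ) : K) ≠ 0) :
    IsSemisimpleRing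
      (MvPolynomial (Fin 2) K ⧸
        Ideal.span {hc (2 * n) (MvPolynomial.X 0 : MvPolynomial (Fin 2) K) (MvPolynomial.X 1),
          hc n ((MvPolynomial.X 0 : MvPolynomial (Fin 2) K) ^ 2) (MvPolynomial.X 1 ^ 2) - 1}) := by
  set I : Ideal (MvPolynomial (Fin 2) K) := Ideal.span {_, _}
  refine isSemisimpleRing_of_hc_eq_zero_of_hc_sq_eq_one (K := K)
    (x := Ideal.Quotient.mk I (MvPolynomial.X 0)) (y := Ideal.Quotient.mk I (MvPolynomial.X 1))
    h2n hn ?generate ?relation₀ ?relation₁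
  case generate =>
    rw [← adjoin_range_mk_X_eq_top I]
    congr 1
    ext
    simp [Fin.exists_fin_two, eq_comm]
  case relation₀ =>
    rw [← map_hc_s9, Ideal.Quotient.eq_zero_iff_mem]
    exact Ideal.subset_span (Set.mem_insert _ _)
  case relation₁ =>
    rw [← map_pow, ← map_pow, ← map_hc_s9, ← map_one (Ideal.Quotient.mk I), Ideal.Quotient.eq]
    exact Ideal.subset_span (Set.mem_insert_of_mem _ rfl)

/-- For `n ≥ 1`, the quotient ring `ℂ[x₁,x₂]/(h_{2n}(x₁,x₂), h_n(x₁²,x₂²) − 1)` is a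
semisimple ring. -/
theorem stmt_9 (n : ℕ) (hn : 1 ≤ n) :
    IsSemisimpleRing
      (MvPolynomial (Fin 2) ℂ ⧸
        Ideal.span {hc (2 * n) (MvPolynomial.X 0 : MvPolynomial (Fin 2) ℂ) (MvPolynomial.X 1),
          hc n ((MvPolynomial.X 0 : MvPolynomial (Fin 2) ℂ) ^ 2) (MvPolynomial.X 1 ^ 2) - 1}) :=
  stmt_9_general n (Nat.cast_ne_zero.mpr (by lia)) (Nat.cast_ne_zero.mpr (by lia))
end

section
/- Let n ≥ 2. The quotient of the polynomial ring ℤ[a₁,…,a_{2n−1}] by the ideal generated by the determinants d_r for 3 ≤ r ≤ 2n together with the element b_n is a free ℤ-module of rank 2n². -/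
/-- The sequence `a₀ = 1, a₁, …, a_d` (and `0` otherwise) in `ℤ[a₁,…,a_d]`. -/
noncomputable def aseq (d : ℕ) (k : ℤ) : MvPolynomial (Fin d) ℤ :=
  if h : 1 ≤ k ∧ k ≤ d then MvPolynomial.X ⟨(k - 1).toNat, by omega⟩
  else if k = 0 then 1 else 0

/-- `d_r := det((a_{1+j−i})_{1≤i,j≤r})` in `ℤ[a₁,…,a_d]`, with `d₀ = 1`. -/
noncomputable def dr (d r : ℕ) : MvPolynomial (Fin d) ℤ :=
  Matrix.det (Matrix.of fun i j : Fin r => aseq d (1 + ((j : ℕ) : ℤ) - ((i : ℕ) : ℤ)))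

/-- `b_r := a_r² + 2∑_{i≥1} (−1)^i a_{r+i} a_{r−i}` in `ℤ[a₁,…,a_d]` (the sum is finite:
all terms with `i > 2d` vanish). -/
noncomputable def bpoly (d r : ℕ) : MvPolynomial (Fin d) ℤ :=
  aseq d r ^ 2 +
    2 * ∑ i ∈ Finset.Icc 1 (2 * d),
      (-1 : MvPolynomial (Fin d) ℤ) ^ i * (aseq d ((r : ℤ) + i) * aseq d ((r : ℤ) - i))

/-!
Put `x = a₁` and `y = a₁² - a₂`. Since `∑ (-1)^r d_r t^r` is inverse to `A(t) = ∑ a_k t^k`, the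
vanishing of `d_r` for `3 ≤ r ≤ 2n` says that `A(t) ≡ 1 / (1 - x t + y t²)` modulo `t^(2n+1)`: with
`x = α + β` and `y = αβ`, each `a_k` is the complete homogeneous symmetric polynomial `h_k(α, β)`.
Moreover `(-1)^n b_n` is the coefficient of `t^(2n)` in `A(t) A(-t)`, which becomes
`c_n = h_n(α², β²)`. As `a_{2n} = 0`, the quotient is `ℤ[x, y] / (h_{2n}, c_n)`, and
`h_{2n} = c_n + y c_{n-1}` turns the ideal into `(c_n, y c_{n-1})`.

Modulo `y`, `c_m` is `x^(2m)`; so multiplying the second generator of an ideal `(c_m, g)` by `y`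
enlarges the quotient by `ℤ[x] / (x^(2m))`, that is, raises its rank by `2m`. Since
`(c_{m+2}, c_{m+1}) = (c_{m+1}, y² c_m)`, induction gives rank `2m(m+1)` for `(c_{m+1}, c_m)`, and
one more factor `y` gives `2n²`.
-/

section HSymmPair

variable {R S : Type*} [CommRing R] [CommRing S]

/-- The complete homogeneous symmetric polynomial `h_k(α, β)` of two quantities, as a function of
`x = α + β` and `y = αβ`; the Dickson polynomials of the second kind satisfy its recurrence. -/
noncomputable def hsymmPair (x y : R) (k : ℕ) : R :=
  (Polynomial.dickson 2 y k).eval x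

@[simp]
theorem hsymmPair_zero (x y : R) : hsymmPair x y 0 = 1 := by
  norm_num [hsymmPair]

@[simp]
theorem hsymmPair_one (x y : R) : hsymmPair x y 1 = x := by
  simp [hsymmPair]

theorem hsymmPair_add_two (x y : R) (k : ℕ) :
    hsymmPair x y (k + 2) = x * hsymmPair x y (k + 1) - y * hsymmPair x y k := by
  simp [hsymmPair]

@[simp]
theorem hsymmPair_zero_right (x : R) (k : ℕ) : hsymmPair x 0 k = x ^ k := by
  simp [hsymmPair]

@[simp]
theorem hsymmPair_two (x y : R) : hsymmPair x y 2 = x ^ 2 - y := by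
  rw [hsymmPair_add_two, hsymmPair_one, hsymmPair_zero, sq, mul_one]

theorem map_hsymmPair {F : Type*} [FunLike F R S] [RingHomClass F R S] (f : F) (x y : R) (k : ℕ) :
    f (hsymmPair x y k) = hsymmPair (f x) (f y) k := by
  change (f : R →+* S) _ = hsymmPair ((f : R →+* S) x) ((f : R →+* S) y) k
  simp only [hsymmPair, ← Polynomial.map_dickson (f : R →+* S), Polynomial.eval_map_apply]

/-- The symmetric polynomial `h_k(α², β²)` as a function of `x = α + β` and `y = αβ`, through
`α² + β² = x² - 2y` and `α²β² = y²`. -/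
noncomputable def hsymmPairSq (x y : R) (k : ℕ) : R :=
  hsymmPair (x ^ 2 - 2 * y) (y ^ 2) k

@[simp]
theorem hsymmPairSq_zero (x y : R) : hsymmPairSq x y 0 = 1 :=
  hsymmPair_zero _ _

theorem hsymmPairSq_add_two (x y : R) (k : ℕ) :
    hsymmPairSq x y (k + 2) =
      (x ^ 2 - 2 * y) * hsymmPairSq x y (k + 1) - y ^ 2 * hsymmPairSq x y k :=
  hsymmPair_add_two _ _ _

theorem hsymmPairSq_zero_right (x : R) (k : ℕ) : hsymmPairSq x 0 k = x ^ (2 * k) := by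
  simp [hsymmPairSq, pow_mul]

theorem map_hsymmPairSq {F : Type*} [FunLike F R S] [RingHomClass F R S] (f : F) (x y : R)
    (k : ℕ) : f (hsymmPairSq x y k) = hsymmPairSq (f x) (f y) k := by
  rw [hsymmPairSq, map_hsymmPair, map_sub, map_pow, map_mul, map_ofNat, map_pow, hsymmPairSq]

open PowerSeries

theorem mk_hsymmPair_mul (x y : R) :
    mk (hsymmPair x y) * (1 - C x * X + C y * X ^ 2) = 1 := by
  ext m
  match m with
  | 0 => simp
  | 1 => simp [mul_add, mul_sub, ← mul_assoc, coeff_one, coeff_succ_mul_X, coeff_mul_X_pow']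
  | m + 2 =>
    simp only [mul_add, mul_sub, mul_one, ← mul_assoc, map_add, map_sub, coeff_mk,
      hsymmPair_add_two, coeff_succ_mul_X, coeff_mul_C, coeff_mul_X_pow, coeff_one,
      Nat.add_eq_zero_iff, OfNat.ofNat_ne_zero, and_false, if_false]
    ring

theorem evalNegHom_C (r : R) : evalNegHom (C r) = C r := by
  ext n
  cases n <;> simp [evalNegHom, coeff_C]

theorem evalNegHom_mk_hsymmPair_mul (x y : R) :
    evalNegHom (mk (hsymmPair x y)) * (1 + C x * X + C y * X ^ 2) = 1 := by
  have h := congrArg evalNegHom (mk_hsymmPair_mul x y)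
  simpa [evalNegHom_C] using h

theorem expand_two_mk_hsymmPair_mul (x y : R) :
    expand 2 two_ne_zero (mk (hsymmPairSq x y)) *
      ((1 - C x * X + C y * X ^ 2) * (1 + C x * X + C y * X ^ 2)) = 1 := by
  have h : expand 2 two_ne_zero (mk (hsymmPairSq x y) * _) = _ :=
    congrArg (expand 2 two_ne_zero) (mk_hsymmPair_mul (x ^ 2 - 2 * y) (y ^ 2))
  simp only [map_sub, map_pow, map_mul, map_ofNat, map_add, map_one, expand_C, expand_X] at h
  linear_combination h

theorem mk_hsymmPair_mul_evalNegHom (x y : R) :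
    mk (hsymmPair x y) * evalNegHom (mk (hsymmPair x y)) =
      expand 2 two_ne_zero (mk (hsymmPairSq x y)) := by
  set U := mk (hsymmPair x y)
  set V := expand 2 two_ne_zero (mk (hsymmPairSq x y))
  linear_combination
    V * evalNegHom U * (1 + C x * X + C y * X ^ 2) * mk_hsymmPair_mul x y
      + V * evalNegHom_mk_hsymmPair_mul x y - U * evalNegHom U * expand_two_mk_hsymmPair_mul x y

theorem mk_hsymmPair_eq (x y : R) :
    mk (hsymmPair x y) =
      expand 2 two_ne_zero (mk (hsymmPairSq x y)) * (1 + C x * X + C y * X ^ 2) := by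
  set U := mk (hsymmPair x y)
  set V := expand 2 two_ne_zero (mk (hsymmPairSq x y))
  linear_combination
    V * (1 + C x * X + C y * X ^ 2) * mk_hsymmPair_mul x y - U * expand_two_mk_hsymmPair_mul x y

theorem hsymmPair_two_mul_add_two (x y : R) (k : ℕ) :
    hsymmPair x y (2 * (k + 1)) = hsymmPairSq x y (k + 1) + y * hsymmPairSq x y k := by
  set V := expand 2 two_ne_zero (mk (hsymmPairSq x y)) with hV
  have coeff_V (m : ℕ) : coeff (2 * m) V = hsymmPairSq x y m := by
    rw [hV, coeff_expand_mul, coeff_mk]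
  have coeff_V_mul_X : coeff (2 * (k + 1)) (V * X) = 0 :=
    (coeff_succ_mul_X (2 * k + 1) V).trans (coeff_expand_of_not_dvd 2 two_ne_zero _ (by omega))
  have coeff_V_mul_X_sq : coeff (2 * (k + 1)) (V * X ^ 2) = coeff (2 * k) V :=
    coeff_mul_X_pow V 2 (2 * k)
  have expanded : V * (1 + C x * X + C y * X ^ 2) = V + C x * (V * X) + C y * (V * X ^ 2) := by
    ring
  rw [← coeff_mk (2 * (k + 1)) (hsymmPair x y), mk_hsymmPair_eq, ← hV, expanded, map_add, map_add,
    coeff_C_mul, coeff_C_mul, coeff_V_mul_X, coeff_V_mul_X_sq, coeff_V, coeff_V, mul_zero, add_zero]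

open Finset

theorem sum_range_two_mul_add_one_of_symm {A : Type*} [CommSemiring A] (n : ℕ) (g : ℕ → A)
    (hg : ∀ i ≤ n, g (n - i) = g (n + i)) :
    ∑ j ∈ range (2 * n + 1), g j = g n + 2 * ∑ i ∈ Icc 1 n, g (n + i) := by
  have upper : ∑ i ∈ Icc 1 n, g (n + i) = ∑ i ∈ range n, g (n + 1 + i) := by
    rw [range_eq_Ico, ← Ico_add_one_right_eq_Icc, Finset.sum_Ico_eq_sum_range, range_eq_Ico]
    simp [add_assoc]
  have lower : ∑ i ∈ range n, g i = ∑ i ∈ range n, g (n + 1 + i) := by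
    rw [← sum_range_reflect]
    refine sum_congr rfl fun i hi ↦ ?_
    rw [mem_range] at hi
    rw [Nat.sub_sub, hg _ (by omega), add_assoc]
  rw [show 2 * n + 1 = n + 1 + n by ring, sum_range_add, sum_range_succ, upper, lower]
  ring

theorem coeff_two_mul_mk_mul_evalNegHom (a : ℕ → R) (n : ℕ) :
    coeff (2 * n) (mk a * evalNegHom (mk a)) =
      (-1) ^ n * (a n ^ 2 + 2 * ∑ i ∈ Icc 1 n, (-1) ^ i * (a (n + i) * a (n - i))) := by
  rw [mul_comm (PowerSeries.mk a), coeff_mul, Nat.sum_antidiagonal_eq_sum_range_succ_mk,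
    Nat.succ_eq_add_one, sum_range_two_mul_add_one_of_symm]
  · simp only [evalNegHom, coeff_rescale, coeff_mk, mul_add, mul_left_comm _ (2 : R), mul_sum]
    congr 1
    · rw [show 2 * n - n = n by omega]; ring
    · refine sum_congr rfl fun i _ ↦ ?_
      rw [show 2 * n - (n + i) = n - i by omega]; ring
  · intro i hi
    simp only [evalNegHom, coeff_rescale, coeff_mk]
    rw [show 2 * n - (n - i) = n + i by omega, show 2 * n - (n + i) = n - i by omega,
      show n + i = n - i + 2 * i by omega, pow_add, pow_mul, neg_one_sq, one_pow]
    ring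

theorem hsymmPair_sq_add_two_mul_sum (x y : R) (n : ℕ) :
    hsymmPair x y n ^ 2 +
        2 * ∑ i ∈ Icc 1 n, (-1) ^ i * (hsymmPair x y (n + i) * hsymmPair x y (n - i)) =
      (-1) ^ n * hsymmPairSq x y n := by
  rw [← coeff_mk n (hsymmPairSq x y), ← coeff_expand_mul 2 two_ne_zero,
    ← mk_hsymmPair_mul_evalNegHom, coeff_two_mul_mk_mul_evalNegHom, ← mul_assoc,
    ← mul_pow, neg_one_mul, neg_neg, one_pow, one_mul]

end HSymmPair

section Toeplitz

variable {R S : Type*} [CommRing R] [CommRing S]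

theorem dvd_sub_iff_dvd_sub_of_mul_eq_one {a b c d p : R} (hab : a * b = 1) (hcd : c * d = 1) :
    p ∣ a - c ↔ p ∣ d - b where
  mp h := by
    rw [show d - b = b * d * (a - c) by linear_combination (-d) * hab + b * hcd]
    exact h.mul_left _
  mpr h := by
    rw [show a - c = a * c * (d - b) by linear_combination c * hab - a * hcd]
    exact h.mul_left _

/-- The determinant `det (s_{1+j-i})` of size `r`, which is `(-1)^r` times the `r`-th coefficient of
the inverse of `∑ s_k t^k` when `s_0 = 1` and `s_k = 0` for `k < 0`. -/
noncomputable def toeplitzDet (s : ℤ → R) (r : ℕ) : R :=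
  Matrix.det (Matrix.of fun i j : Fin r ↦ s (1 + ((j : ℕ) : ℤ) - ((i : ℕ) : ℤ)))

theorem map_toeplitzDet (f : R →+* S) (s : ℤ → R) (r : ℕ) :
    f (toeplitzDet s r) = toeplitzDet (f ∘ s) r :=
  f.map_det _

theorem toeplitzDet_two {s : ℤ → R} (h0 : s 0 = 1) : toeplitzDet s 2 = s 1 ^ 2 - s 2 := by
  simp [toeplitzDet, Matrix.det_fin_two, h0, one_add_one_eq_two, sq]

/-- The Jacobi–Trudi matrix of the hook partition `(m, 1^r)`: its first row is
`s_m, …, s_{m+r}` and the rows below it are `(s_{j-i})` with `0 ≤ i < r`, `0 ≤ j ≤ r`. -/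
def hookMatrix (s : ℤ → R) (r : ℕ) (m : ℤ) : Matrix (Fin (r + 1)) (Fin (r + 1)) R :=
  Matrix.of (Fin.cons (fun j ↦ s (m + (j : ℕ))) fun i j ↦ s ((j : ℕ) - (i : ℕ)))

theorem det_hookMatrix_one (s : ℤ → R) (r : ℕ) :
    (hookMatrix s r 1).det = toeplitzDet s (r + 1) := by
  rw [toeplitzDet, hookMatrix]
  congr 1
  ext i j
  cases i using Fin.cases <;> simp [add_comm (1 : ℤ)]

variable {s : ℤ → R} (h0 : s 0 = 1) (hneg : ∀ k < 0, s k = 0)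
include h0 hneg

theorem det_hookMatrix_succ (r : ℕ) (m : ℤ) :
    (hookMatrix s (r + 1) m).det =
      s m * toeplitzDet s (r + 1) - (hookMatrix s r (m + 1)).det := by
  set A := hookMatrix s (r + 1) m with hA
  have entry_zero : A 0 0 = s m := by simp [hA, hookMatrix]
  have entry_one : A (Fin.succ 0) 0 = 1 := by simp [hA, hookMatrix, h0]
  have entry_below (i : Fin r) : A i.succ.succ 0 = 0 := hneg _ (by simp; omega)
  have minor_zero : (A.submatrix (Fin.succAbove 0) Fin.succ).det = toeplitzDet s (r + 1) := by
    rw [toeplitzDet]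
    congr 1
    ext i j
    simp [hA, hookMatrix, add_comm]
  have minor_one : A.submatrix (Fin.succAbove (Fin.succ 0)) Fin.succ = hookMatrix s r (m + 1) := by
    ext i j
    cases i using Fin.cases <;> simp [hA, hookMatrix, add_assoc, add_comm (1 : ℤ)]
  rw [Matrix.det_succ_column_zero, Fin.sum_univ_succ, Fin.sum_univ_succ, Finset.sum_eq_zero,
    entry_zero, entry_one, minor_zero, minor_one]
  · simp [sub_eq_add_neg]
  · intro i _
    rw [entry_below, mul_zero, zero_mul]

open Finset.HasAntidiagonal in
theorem det_hookMatrix_eq_sum (r : ℕ) (m : ℤ) :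
    (hookMatrix s r m).det =
      ∑ p ∈ antidiagonal r, (-1) ^ p.1 * (s (m + p.1) * toeplitzDet s p.2) := by
  induction r generalizing m with
  | zero => simp [hookMatrix, toeplitzDet]
  | succ r ih =>
    rw [det_hookMatrix_succ h0 hneg, ih, Finset.Nat.sum_antidiagonal_succ]
    simp [pow_succ, add_assoc, add_comm (1 : ℤ), sub_eq_add_neg]

open PowerSeries

theorem mk_mul_evalNegHom_mk_toeplitzDet :
    mk (fun k : ℕ ↦ s k) * evalNegHom (mk (toeplitzDet s)) = 1 := by
  ext r
  rw [coeff_mul, coeff_one]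
  simp only [evalNegHom, coeff_rescale, coeff_mk]
  cases r with
  | zero => simp [h0, toeplitzDet]
  | succ r =>
    rw [if_neg r.succ_ne_zero, Finset.Nat.sum_antidiagonal_succ, ← det_hookMatrix_one,
      det_hookMatrix_eq_sum h0 hneg, Finset.mul_sum, Nat.cast_zero, h0, one_mul,
      ← Finset.sum_add_distrib]
    refine Finset.sum_eq_zero fun p hp ↦ ?_
    obtain rfl := Finset.HasAntidiagonal.mem_antidiagonal.1 hp
    have sign_eq : (-1 : R) ^ (p.1 + p.2 + 1) * (-1) ^ p.1 = -(-1) ^ p.2 := by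
      rw [← pow_add, show p.1 + p.2 + 1 + p.1 = 2 * p.1 + (p.2 + 1) by ring, pow_add, pow_mul,
        neg_one_sq, one_pow, one_mul, pow_succ, mul_neg_one]
    rw [Nat.cast_add, Nat.cast_one, add_comm 1 (p.1 : ℤ)]
    linear_combination s (p.1 + 1) * toeplitzDet s p.2 * sign_eq

theorem toeplitzDet_eq_zero_iff {x y : R} (h1 : s 1 = x) (h2 : s 2 = x ^ 2 - y) (N : ℕ) :
    (∀ r, 3 ≤ r → r ≤ N → toeplitzDet s r = 0) ↔ ∀ k : ℕ, k ≤ N → s k = hsymmPair x y k := by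
  have dvd_iff : X ^ (N + 1) ∣ mk (fun k : ℕ ↦ s k) - mk (hsymmPair x y) ↔
      X ^ (N + 1) ∣ (1 - C x * X + C y * X ^ 2) - evalNegHom (mk (toeplitzDet s)) :=
    dvd_sub_iff_dvd_sub_of_mul_eq_one (mk_mul_evalNegHom_mk_toeplitzDet h0 hneg)
      (mk_hsymmPair_mul x y)
  have coeff_eq (r : ℕ) :
      coeff r ((1 - C x * X + C y * X ^ 2) - evalNegHom (mk (toeplitzDet s))) =
        if 3 ≤ r then -((-1) ^ r * toeplitzDet s r) else 0 := by
    simp only [map_sub, map_add, coeff_one, coeff_C_mul, coeff_X, coeff_X_pow, evalNegHom,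
      coeff_rescale, coeff_mk]
    match r with
    | 0 => simp [toeplitzDet]
    | 1 => simp [toeplitzDet, h1]
    | 2 => simp [toeplitzDet_two h0, h1, h2]
    | r + 3 => simp
  simp only [X_pow_dvd_iff, Nat.lt_succ_iff, coeff_eq, ite_eq_right_iff, neg_eq_zero,
    neg_one_pow_mul_eq_zero_iff] at dvd_iff
  simp only [map_sub, coeff_mk, sub_eq_zero] at dvd_iff
  exact ⟨fun h ↦ dvd_iff.2 fun r hr h3 ↦ h r h3 hr, fun h r h3 hr ↦ dvd_iff.1 h r hr h3⟩

end Toeplitz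

section RelationIdeal

variable {R : Type*} [CommRing R]

theorem aseq_zero (d : ℕ) : aseq d 0 = 1 := by simp [aseq]

theorem aseq_of_neg (d : ℕ) {k : ℤ} (hk : k < 0) : aseq d k = 0 := by
  rw [aseq, dif_neg (by omega), if_neg (by omega)]

theorem aseq_of_lt (d : ℕ) {k : ℤ} (hk : d < k) : aseq d k = 0 := by
  rw [aseq, dif_neg (by omega), if_neg (by omega)]

theorem aseq_succ {d : ℕ} (i : Fin d) : aseq d ((i + 1 : ℕ) : ℤ) = MvPolynomial.X i := by
  rw [aseq, dif_pos (by omega)]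
  simp

theorem map_dr {d : ℕ} (f : MvPolynomial (Fin d) ℤ →+* R) (r : ℕ) :
    f (dr d r) = toeplitzDet (f ∘ aseq d) r :=
  map_toeplitzDet f _ r

theorem bpoly_eq {d n : ℕ} (hn : n ≤ 2 * d) :
    bpoly d n = aseq d n ^ 2 + 2 * ∑ i ∈ Finset.Icc 1 n,
      (-1) ^ i * (aseq d (n + i : ℕ) * aseq d (n - i : ℕ)) := by
  rw [bpoly, ← Finset.sum_subset (Finset.Icc_subset_Icc_right hn)]
  · congr 2
    refine Finset.sum_congr rfl fun i hi ↦ ?_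
    rw [Nat.cast_add, Nat.cast_sub (Finset.mem_Icc.1 hi).2]
  · intro i hi hin
    rw [Finset.mem_Icc] at hi hin
    rw [aseq_of_neg d (k := n - i) (by omega), mul_zero, mul_zero]

/-- The ideal generated by `d_3, …, d_{2n}` and `b_n` in `ℤ[a₁, …, a_{2n-1}]`. -/
noncomputable def relationIdeal (n : ℕ) : Ideal (MvPolynomial (Fin (2 * n - 1)) ℤ) :=
  Ideal.span (insert (bpoly (2 * n - 1) n) ((fun r => dr (2 * n - 1) r) '' Set.Icc 3 (2 * n)))

theorem map_bpoly_of_map_aseq {d n : ℕ} (hn : n ≤ 2 * d) {f : MvPolynomial (Fin d) ℤ →+* R}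
    {x y : R} (h : ∀ k : ℕ, k ≤ 2 * n → f (aseq d k) = hsymmPair x y k) :
    f (bpoly d n) = (-1) ^ n * hsymmPairSq x y n := by
  rw [bpoly_eq hn, ← hsymmPair_sq_add_two_mul_sum]
  simp only [map_add, map_mul, map_pow, map_sum, map_neg, map_one, map_ofNat]
  rw [h n (by omega)]
  congr 2
  refine Finset.sum_congr rfl fun i hi ↦ ?_
  rw [Finset.mem_Icc] at hi
  rw [h _ (by omega), h _ (by omega)]

theorem relationIdeal_le_ker_iff {n : ℕ} (hn : 0 < n) (f : MvPolynomial (Fin (2 * n - 1)) ℤ →+* R)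
    {x y : R} (hx : f (aseq (2 * n - 1) 1) = x) (hy : f (aseq (2 * n - 1) 2) = x ^ 2 - y) :
    relationIdeal n ≤ RingHom.ker f ↔
      (∀ k : ℕ, k ≤ 2 * n → f (aseq (2 * n - 1) k) = hsymmPair x y k) ∧
        hsymmPairSq x y n = 0 := by
  have map_dr_eq_zero_iff : (∀ r, 3 ≤ r → r ≤ 2 * n → f (dr (2 * n - 1) r) = 0) ↔
      ∀ k : ℕ, k ≤ 2 * n → f (aseq (2 * n - 1) k) = hsymmPair x y k := by
    simp only [map_dr]
    exact toeplitzDet_eq_zero_iff (by simp [aseq_zero]) (fun k hk ↦ by simp [aseq_of_neg _ hk])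
      hx hy (2 * n)
  have le_ker_iff : relationIdeal n ≤ RingHom.ker f ↔ f (bpoly (2 * n - 1) n) = 0 ∧
      ∀ r, 3 ≤ r → r ≤ 2 * n → f (dr (2 * n - 1) r) = 0 := by
    rw [relationIdeal, Ideal.span_le, Set.insert_subset_iff, Set.image_subset_iff]
    exact and_congr_right' ⟨fun h r h3 hr ↦ h ⟨h3, hr⟩, fun h r hr ↦ h r hr.1 hr.2⟩
  rw [le_ker_iff, and_comm, map_dr_eq_zero_iff]
  refine and_congr_right fun h ↦ ?_
  rw [map_bpoly_of_map_aseq (by omega) h, neg_one_pow_mul_eq_zero_iff]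

end RelationIdeal

section Presentation

open Polynomial Bivariate

/-- The ideal `(h_{2n}(α, β), h_n(α², β²))` of `R[x, y]`, where `x = α + β` and `y = αβ`. In the
bivariate polynomial ring `R[X][Y]` these variables are `C X` and `Y`. -/
noncomputable def pairIdeal (R : Type*) [CommRing R] (n : ℕ) : Ideal R[X][Y] :=
  Ideal.span {hsymmPair (R := R[X][Y]) (C X) Y (2 * n), hsymmPairSq (R := R[X][Y]) (C X) Y n}

variable (R : Type*) [CommRing R] (n : ℕ)

theorem hsymmPair_mk_pairIdeal :
    hsymmPair (Ideal.Quotient.mk (pairIdeal R n) (C X)) (Ideal.Quotient.mk _ Y) (2 * n) = 0 := by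
  rw [← map_hsymmPair, Ideal.Quotient.eq_zero_iff_mem]
  exact Ideal.subset_span (by simp)

theorem hsymmPairSq_mk_pairIdeal :
    hsymmPairSq (Ideal.Quotient.mk (pairIdeal R n) (C X)) (Ideal.Quotient.mk _ Y) n = 0 := by
  rw [← map_hsymmPairSq, Ideal.Quotient.eq_zero_iff_mem]
  exact Ideal.subset_span (by simp)

theorem pairIdeal_le_ker_aevalAeval_iff {T : Type*} [CommRing T] [Algebra R T] (x y : T) :
    pairIdeal R n ≤ RingHom.ker (aevalAeval (R := R) x y) ↔
      hsymmPair x y (2 * n) = 0 ∧ hsymmPairSq x y n = 0 := by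
  rw [pairIdeal, Ideal.span_le, Set.insert_subset_iff, Set.singleton_subset_iff]
  simp only [SetLike.mem_coe, RingHom.mem_ker, map_hsymmPair, map_hsymmPairSq, aevalAeval_X,
    aevalAeval_Y]

variable {n} {T : Type*} [CommRing T] {x y : T}

theorem aeval_hsymmPair_aseq (h : hsymmPair x y (2 * n) = 0) {k : ℕ} (hk : k ≤ 2 * n) :
    MvPolynomial.aeval (fun i : Fin (2 * n - 1) ↦ hsymmPair x y (i + 1)) (aseq (2 * n - 1) k) =
      hsymmPair x y k := by
  obtain rfl | hk0 := k.eq_zero_or_pos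
  · simp [aseq_zero]
  obtain rfl | hkn := hk.eq_or_lt
  · rw [aseq_of_lt _ (by omega), map_zero, h]
  · obtain ⟨i, rfl⟩ : ∃ i : Fin (2 * n - 1), k = i + 1 :=
      ⟨⟨k - 1, by omega⟩, (Nat.sub_add_cancel hk0).symm⟩
    rw [aseq_succ, MvPolynomial.aeval_X]

theorem relationIdeal_le_ker_aeval_hsymmPair (hn : 0 < n) (h : hsymmPair x y (2 * n) = 0)
    (hsq : hsymmPairSq x y n = 0) :
    relationIdeal n ≤ RingHom.ker
      (MvPolynomial.aeval (R := ℤ) fun i : Fin (2 * n - 1) ↦ hsymmPair x y (i + 1)) := by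
  let f := MvPolynomial.aeval (R := ℤ) fun i : Fin (2 * n - 1) ↦ hsymmPair x y (i + 1)
  have map_aseq (k : ℕ) (hk : k ≤ 2 * n) : f (aseq _ k) = hsymmPair x y k :=
    aeval_hsymmPair_aseq h hk
  have map_aseq_one : f (aseq _ 1) = x := (map_aseq 1 (by omega)).trans (hsymmPair_one x y)
  have map_aseq_two : f (aseq _ 2) = x ^ 2 - y := (map_aseq 2 (by omega)).trans (hsymmPair_two x y)
  exact (relationIdeal_le_ker_iff hn f.toRingHom map_aseq_one map_aseq_two).2 ⟨map_aseq, hsq⟩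

variable (hn : 0 < n)

local notation "π" => Ideal.Quotient.mk (pairIdeal ℤ n)
local notation "ρ" => Ideal.Quotient.mk (relationIdeal n)
local notation "a" => aseq (2 * n - 1)

/-- The homomorphism `a_k ↦ h_k(α, β)` from the presentation by `d_3, …, d_{2n}` and `b_n` to the
presentation by `x = α + β` and `y = αβ`. -/
noncomputable def toPairQuotient :
    (MvPolynomial (Fin (2 * n - 1)) ℤ ⧸ relationIdeal n) →ₐ[ℤ] ℤ[X][Y] ⧸ pairIdeal ℤ n :=
  Ideal.Quotient.liftₐ _ _
    (relationIdeal_le_ker_aeval_hsymmPair hn (hsymmPair_mk_pairIdeal ℤ n)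
      (hsymmPairSq_mk_pairIdeal ℤ n))

theorem toPairQuotient_mk_aseq {k : ℕ} (hk : k ≤ 2 * n) :
    toPairQuotient hn (ρ (a k)) = hsymmPair (π (C X)) (π Y) k :=
  aeval_hsymmPair_aseq (hsymmPair_mk_pairIdeal ℤ n) hk

include hn in
theorem mk_relationIdeal_aseq {k : ℕ} (hk : k ≤ 2 * n) :
    ρ (a k) = hsymmPair (ρ (a 1)) (ρ (a 1) ^ 2 - ρ (a 2)) k :=
  ((relationIdeal_le_ker_iff hn ρ rfl (sub_sub_cancel _ _).symm).1 Ideal.mk_ker.ge).1 k hk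

include hn in
theorem pairIdeal_le_ker_aevalAeval :
    pairIdeal ℤ n ≤ RingHom.ker (aevalAeval (R := ℤ) (ρ (a 1)) (ρ (a 1) ^ 2 - ρ (a 2))) := by
  refine (pairIdeal_le_ker_aevalAeval_iff ℤ n _ _).2 ⟨?_, ?_⟩
  · rw [← mk_relationIdeal_aseq hn le_rfl, aseq_of_lt _ (by omega), map_zero]
  · exact ((relationIdeal_le_ker_iff hn ρ rfl (sub_sub_cancel _ _).symm).1 Ideal.mk_ker.ge).2

/-- The homomorphism `x ↦ a₁`, `y ↦ a₁² - a₂` between the two presentations. -/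
noncomputable def ofPairQuotient :
    (ℤ[X][Y] ⧸ pairIdeal ℤ n) →ₐ[ℤ] MvPolynomial (Fin (2 * n - 1)) ℤ ⧸ relationIdeal n :=
  Ideal.Quotient.liftₐ _ _ (pairIdeal_le_ker_aevalAeval hn)

theorem ofPairQuotient_x : ofPairQuotient hn (π (C X)) = ρ (a 1) :=
  aevalAeval_X _ _

theorem ofPairQuotient_y : ofPairQuotient hn (π Y) = ρ (a 1) ^ 2 - ρ (a 2) :=
  aevalAeval_Y _ _

theorem toPairQuotient_comp_ofPairQuotient :
    (toPairQuotient hn).comp (ofPairQuotient hn) = AlgHom.id ℤ _ := by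
  have map_aseq_one : toPairQuotient hn (ρ (a 1)) = π (C X) :=
    (toPairQuotient_mk_aseq hn (k := 1) (by omega)).trans (hsymmPair_one _ _)
  have map_aseq_two : toPairQuotient hn (ρ (a 2)) = π (C X) ^ 2 - π Y :=
    (toPairQuotient_mk_aseq hn (k := 2) (by omega)).trans (hsymmPair_two _ _)
  refine Ideal.Quotient.algHom_ext _ ?_
  ext
  · change toPairQuotient hn (ofPairQuotient hn (π (C X))) = π (C X)
    rw [ofPairQuotient_x, map_aseq_one]
  · change toPairQuotient hn (ofPairQuotient hn (π Y)) = π Y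
    rw [ofPairQuotient_y, map_sub, map_pow, map_aseq_one, map_aseq_two, sub_sub_cancel]

theorem ofPairQuotient_comp_toPairQuotient :
    (ofPairQuotient hn).comp (toPairQuotient hn) = AlgHom.id ℤ _ := by
  refine Ideal.Quotient.algHom_ext _ (MvPolynomial.algHom_ext fun i ↦ ?_)
  have hi : (i : ℕ) + 1 ≤ 2 * n := by omega
  change ofPairQuotient hn (toPairQuotient hn (ρ (MvPolynomial.X i))) = ρ (MvPolynomial.X i)
  calc
    _ = ofPairQuotient hn (hsymmPair (π (C X)) (π Y) (i + 1)) := by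
      rw [← aseq_succ, toPairQuotient_mk_aseq hn hi]
    _ = hsymmPair (ρ (a 1)) (ρ (a 1) ^ 2 - ρ (a 2)) (i + 1) := by
      rw [map_hsymmPair, ofPairQuotient_x, ofPairQuotient_y]
    _ = ρ (MvPolynomial.X i) := by
      rw [← mk_relationIdeal_aseq hn hi, aseq_succ]

/-- The isomorphism between the presentation by `d_3, …, d_{2n}` and `b_n` and the one by two
variables and two relations. -/
noncomputable def quotientRelationIdealEquiv :
    (MvPolynomial (Fin (2 * n - 1)) ℤ ⧸ relationIdeal n) ≃ₐ[ℤ] ℤ[X][Y] ⧸ pairIdeal ℤ n :=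
  AlgEquiv.ofAlgHom _ _ (toPairQuotient_comp_ofPairQuotient hn)
    (ofPairQuotient_comp_toPairQuotient hn)

end Presentation

section FreeQuotient

open Module Ideal

theorem nonempty_basis_fin_of_exact {R A B C : Type*} [CommRing R] [AddCommGroup A] [AddCommGroup B]
    [AddCommGroup C] [Module R A] [Module R B] [Module R C] {f : A →ₗ[R] B} {g : B →ₗ[R] C}
    (hf : Function.Injective f) (hg : Function.Surjective g) (hfg : Function.Exact f g) {a c : ℕ}
    (hA : Nonempty (Basis (Fin a) R A)) (hC : Nonempty (Basis (Fin c) R C)) :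
    Nonempty (Basis (Fin (a + c)) R B) := by
  obtain ⟨bA⟩ := hA
  obtain ⟨bC⟩ := hC
  have : Projective R C := Projective.of_basis bC
  obtain ⟨s, hs⟩ := projective_lifting_property g LinearMap.id hg
  obtain ⟨e, -⟩ := hfg.splitSurjectiveEquiv hf ⟨s, hs⟩
  exact ⟨((bA.prod bC).reindex finSumFinEquiv).map e.symm⟩

variable {k R : Type*} [CommRing k] [CommRing R] [Algebra k R]

theorem nonempty_basis_quotient_span_pair_mul {f y : R} (hy : ∀ p, f ∣ y * p → f ∣ p) (g : R)
    {a c : ℕ} (ha : Nonempty (Basis (Fin a) k (R ⧸ span {f, g})))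
    (hc : Nonempty (Basis (Fin c) k (R ⧸ span {f, y}))) :
    Nonempty (Basis (Fin (a + c)) k (R ⧸ span {f, y * g})) := by
  have hle : span {f, g} ≤ Submodule.comap (LinearMap.mulLeft R y) (span {f, y * g}) := by
    rw [span_le]
    rintro _ (rfl | rfl)
    · exact mul_mem_left _ _ (mem_span_pair.2 ⟨1, 0, by ring⟩)
    · exact mem_span_pair.2 ⟨0, 1, by simp⟩
  have hle' : span {f, y * g} ≤ span {f, y} := by
    rw [span_le]
    rintro _ (rfl | rfl)
    · exact mem_span_pair.2 ⟨1, 0, by ring⟩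
    · exact mem_span_pair.2 ⟨0, g, by ring⟩
  let mulY : (R ⧸ span {f, g}) →ₗ[R] R ⧸ span {f, y * g} := Submodule.mapQ _ _ _ hle
  let proj : (R ⧸ span {f, y * g}) →ₗ[R] R ⧸ span {f, y} := Submodule.factor hle'
  refine nonempty_basis_fin_of_exact (f := mulY.restrictScalars k) (g := proj.restrictScalars k)
    ?_ (Submodule.factor_surjective hle') ?_ ha hc
  · refine (injective_iff_map_eq_zero mulY).2 fun z hz ↦ ?_
    obtain ⟨p, rfl⟩ := Ideal.Quotient.mk_surjective z
    obtain ⟨u, v, huv⟩ := mem_span_pair.1 (Ideal.Quotient.eq_zero_iff_mem.1 hz : y * p ∈ _)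
    obtain ⟨w, hw⟩ := hy (p - v * g) ⟨u, by linear_combination -huv⟩
    exact Ideal.Quotient.eq_zero_iff_mem.2 (mem_span_pair.2 ⟨w, v, by linear_combination -hw⟩)
  · intro z
    obtain ⟨p, rfl⟩ := Ideal.Quotient.mk_surjective z
    constructor
    · intro hp
      obtain ⟨u, v, rfl⟩ := mem_span_pair.1 (Ideal.Quotient.eq_zero_iff_mem.1 hp : p ∈ _)
      refine ⟨Ideal.Quotient.mk _ v, Ideal.Quotient.eq.2 (?_ : y * v - _ ∈ _)⟩
      exact mem_span_pair.2 ⟨-u, 0, by ring⟩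
    · rintro ⟨w, hw⟩
      obtain ⟨q, rfl⟩ := Ideal.Quotient.mk_surjective w
      rw [← hw]
      have hmem : y * q ∈ span {f, y} := mem_span_pair.2 ⟨0, q, by ring⟩
      exact Ideal.Quotient.eq_zero_iff_mem.2 hmem

open Polynomial

theorem dvd_of_dvd_X_mul {f p : R[X]} (hf : f.coeff 0 ∈ nonZeroDivisors R) (h : f ∣ X * p) :
    f ∣ p := by
  obtain ⟨u, hu⟩ := h
  have hu0 : f.coeff 0 * u.coeff 0 = 0 := by
    rw [← mul_coeff_zero, ← hu, coeff_X_mul_zero]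
  obtain ⟨v, rfl⟩ : X ∣ u := X_dvd_iff.2 ((mul_left_mem_nonZeroDivisors_eq_zero_iff hf).1 hu0)
  exact ⟨v, isRegular_X.left (by simpa [mul_left_comm] using hu)⟩

theorem span_pair_X_eq (f : R[X]) : span {f, X} = span {C (f.coeff 0), X} := by
  conv_lhs => rw [← X_mul_divX_add f, span_pair_right_mul_add]

theorem nonempty_basis_quotient_span_pair_X [Nontrivial k] {f : k[X][X]} {m : ℕ}
    (hf : f.coeff 0 = X ^ m) :
    Nonempty (Basis (Fin m) k (k[X][X] ⧸ span {f, X})) := by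
  let b : Basis (Fin m) k (k[X] ⧸ span {(X ^ m : k[X])}) :=
    (AdjoinRoot.powerBasis' (monic_X_pow m)).basis.reindex (finCongr (natDegree_X_pow m))
  let e := (quotientSpanCXSubCAlgEquiv (X ^ m : k[X]) 0).restrictScalars k
  rw [span_pair_X_eq, hf, ← sub_zero (X : k[X][X]), ← map_zero C]
  exact ⟨b.map e.symm.toLinearEquiv⟩

end FreeQuotient

section Free

open Polynomial Bivariate Module Ideal

variable (k : Type*) [CommRing k]

theorem coeff_zero_hsymmPairSq (m : ℕ) :
    (hsymmPairSq (R := k[X][Y]) (C X) Y m).coeff 0 = X ^ (2 * m) := by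
  have h := map_hsymmPairSq constantCoeff (C X) (Y : k[X][Y]) m
  rwa [constantCoeff_apply, constantCoeff_apply, constantCoeff_apply, coeff_C_zero, coeff_X_zero,
    hsymmPairSq_zero_right] at h

theorem span_hsymmPairSq_add_two {R : Type*} [CommRing R] (x y : R) (m : ℕ) :
    span {hsymmPairSq x y (m + 2), hsymmPairSq x y (m + 1)} =
      span {hsymmPairSq x y (m + 1), y ^ 2 * hsymmPairSq x y m} := by
  rw [hsymmPairSq_add_two, sub_eq_neg_add, span_pair_add_mul_right, span_pair_comm, span_pair_neg]

variable {k} [Nontrivial k]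

local notation "c" => hsymmPairSq (R := k[X][Y]) (C X) Y

theorem nonempty_basis_quotient_span_hsymmPairSq_mul_Y {m r : ℕ} {g : k[X][Y]}
    (h : Nonempty (Basis (Fin r) k (k[X][Y] ⧸ span {c (m + 1), g}))) :
    Nonempty (Basis (Fin (r + 2 * (m + 1))) k (k[X][Y] ⧸ span {c (m + 1), Y * g})) := by
  have hcoeff := coeff_zero_hsymmPairSq k (m + 1)
  have hdvd (p) (hp : c (m + 1) ∣ Y * p) : c (m + 1) ∣ p :=
    dvd_of_dvd_X_mul (hcoeff ▸ (monic_X_pow _).mem_nonZeroDivisors) hp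
  exact nonempty_basis_quotient_span_pair_mul hdvd g h (nonempty_basis_quotient_span_pair_X hcoeff)

theorem nonempty_basis_quotient_span_hsymmPairSq (m : ℕ) :
    Nonempty (Basis (Fin (2 * m * (m + 1))) k (k[X][Y] ⧸ span {c (m + 1), c m})) := by
  induction m with
  | zero =>
    have htop : span {c (0 + 1), c 0} = ⊤ :=
      (eq_top_iff_one _).2 (subset_span (by simp))
    rw [htop]
    have : IsEmpty (Fin (2 * 0 * (0 + 1))) := by simpa using Fin.isEmpty
    exact ⟨Basis.empty _⟩
  | succ m ih =>
    have rank_eq : 2 * (m + 1) * (m + 1 + 1) = 2 * m * (m + 1) + 2 * (m + 1) + 2 * (m + 1) := by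
      ring
    rw [span_hsymmPairSq_add_two, sq, mul_assoc Y Y, rank_eq]
    exact nonempty_basis_quotient_span_hsymmPairSq_mul_Y
      (nonempty_basis_quotient_span_hsymmPairSq_mul_Y ih)

variable (k) in
theorem nonempty_basis_quotient_pairIdeal {n : ℕ} (hn : 0 < n) :
    Nonempty (Basis (Fin (2 * n ^ 2)) k (k[X][Y] ⧸ pairIdeal k n)) := by
  obtain ⟨m, rfl⟩ := Nat.exists_eq_add_one.2 hn
  have rank_eq : 2 * (m + 1) ^ 2 = 2 * m * (m + 1) + 2 * (m + 1) := by ring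
  rw [pairIdeal, hsymmPair_two_mul_add_two, span_pair_comm, span_pair_left_add, rank_eq]
  exact nonempty_basis_quotient_span_hsymmPairSq_mul_Y (nonempty_basis_quotient_span_hsymmPairSq m)

end Free

/-- For `n ≥ 2`, the quotient of `ℤ[a₁,…,a_{2n−1}]` by the ideal generated by the `d_r`
for `3 ≤ r ≤ 2n` together with `b_n` is a free `ℤ`-module of rank `2n²`. -/
theorem stmt_16 (n : ℕ) (hn : 2 ≤ n) :
    Module.Free ℤ
      (MvPolynomial (Fin (2 * n - 1)) ℤ ⧸
        Ideal.span
          (insert (bpoly (2 * n - 1) n) ((fun r => dr (2 * n - 1) r) '' Set.Icc 3 (2 * n)))) ∧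
    Module.finrank ℤ
      (MvPolynomial (Fin (2 * n - 1)) ℤ ⧸
        Ideal.span
          (insert (bpoly (2 * n - 1) n) ((fun r => dr (2 * n - 1) r) '' Set.Icc 3 (2 * n))))
      = 2 * n ^ 2 := by
  have n_pos : 0 < n := by omega
  obtain ⟨pairBasis⟩ := nonempty_basis_quotient_pairIdeal ℤ n_pos
  let basis := pairBasis.map (quotientRelationIdealEquiv n_pos).symm.toLinearEquiv
  exact ⟨.of_basis basis, (Module.finrank_eq_card_basis basis).trans (Fintype.card_fin _)⟩
end
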